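/- Let E(G) = E₁ ∪ E₂ be a (3,5)-free blue-red coloring of the edges of a graph G, and let v ∈ V(G). Then the subgraph G₂(v) induced by the red neighborhood of v does not contain K₁ + C₅ + C₅ + C₅ (the join of a single vertex with three disjoint 5-cycles) as a subgraph. -/

import Mathlib

open SimpleGraph

/-- A blue-red coloring of the edges of `G`: a partition `E(G) = E₁ ∪ E₂`,
`E₁ ∩ E₂ = ∅` (edges in `E₁` are blue, edges in `E₂` are red). -/
def IsBRColoring {V : Type*} (G : SimpleGraph V) (E1 E2 : Set (Sym2 V)) : Prop :=
  E1 ∪ E2 = G.edgeSet ∧ E1 ∩ E2 = ∅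

/-- `G` has an `n`-clique all of whose edges lie in the edge set `E`
(a monochromatic `n`-clique in the color `E`). -/
def HasMonoNClique {V : Type*} (G : SimpleGraph V) (E : Set (Sym2 V)) (n : ℕ) : Prop :=
  ∃ S : Finset V, G.IsNClique n S ∧ ∀ x ∈ S, ∀ y ∈ S, x ≠ y → s(x, y) ∈ E

/-- The blue-red coloring `E1, E2` is `(p,q)`-free: there is no blue `p`-clique
and no red `q`-clique. -/
def IsPQFree {V : Type*} (G : SimpleGraph V) (E1 E2 : Set (Sym2 V)) (p q : ℕ) : Prop :=
  ¬ HasMonoNClique G E1 p ∧ ¬ HasMonoNClique G E2 q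

/-- `G → (p,q)` : no blue-red coloring of `E(G)` is `(p,q)`-free. -/
def Arrows {V : Type*} (G : SimpleGraph V) (p q : ℕ) : Prop :=
  ∀ E1 E2 : Set (Sym2 V), IsBRColoring G E1 E2 → ¬ IsPQFree G E1 E2 p q

/-- The neighborhood of `v` in the color `E`: all neighbors `u` of `v`
with `[v,u] ∈ E`.  With `E = E1` this is `N₁(v)`, with `E = E2` it is `N₂(v)`. -/
def colorNbhd {V : Type*} (G : SimpleGraph V) (E : Set (Sym2 V)) (v : V) : Set V :=
  {u | G.Adj v u ∧ s(v, u) ∈ E}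

/-- The join `G + H` of two graphs on disjoint vertex sets: all edges of `G`,
all edges of `H`, and all pairs `[x,y]` with `x ∈ V(G)`, `y ∈ V(H)`. -/
def graphJoin {α β : Type*} (G : SimpleGraph α) (H : SimpleGraph β) :
    SimpleGraph (α ⊕ β) where
  Adj x y :=
    match x, y with
    | .inl a, .inl b => G.Adj a b
    | .inr a, .inr b => H.Adj a b
    | .inl _, .inr _ => True
    | .inr _, .inl _ => True
  symm := by refine ⟨?_⟩; rintro (a | a) (b | b) <;> simp [SimpleGraph.adj_comm]
  loopless := by refine ⟨?_⟩; rintro (a | a) <;> simp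

/-- `G` contains a copy of `H` as a subgraph: there is an injective map of the
vertices of `H` into the vertices of `G` sending edges to edges. -/
def ContainsCopy {V W : Type*} (G : SimpleGraph V) (H : SimpleGraph W) : Prop :=
  ∃ f : W ↪ V, ∀ a b : W, H.Adj a b → G.Adj (f a) (f b)

/-- `s` is an independent set of `G`: no two of its vertices are adjacent. -/
def IsIndepSet {V : Type*} (G : SimpleGraph V) (s : Set V) : Prop :=
  ∀ x ∈ s, ∀ y ∈ s, ¬ G.Adj x y

set_option linter.unusedSimpArgs false
set_option linter.unusedVariables false

namespace K1C5

/-- Adjacency mask of `K₁ + C₅ + C₅ + C₅` on `{0,…,15}`: bit `16 x + y` is set iff `x ~ y`.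
Vertex `0` is the `K₁`, the cycles are `1..5`, `6..10`, `11..15`. -/
def gmask : ℕ := 36184420515289994254271750683660704842747709886737643278107485919845902843902

/-- Adjacency in the 16-vertex graph. -/
def A (x y : ℕ) : Bool := gmask.testBit (16 * x + y)

/-- A colouring (`true` is blue) of the 16-vertex graph with no blue triangle and no red `K₄`. -/
structure Good (c : ℕ → ℕ → Bool) : Prop where
  symm : ∀ x y, c x y = c y x
  tri : ∀ x y z, x < 16 → y < 16 → z < 16 → A x y = true → A x z = true → A y z = true →
    c x y = true → c x z = true → c y z = true → False
  k4 : ∀ x y z t, x < 16 → y < 16 → z < 16 → t < 16 →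
    A x y = true → A x z = true → A x t = true → A y z = true → A y t = true → A z t = true →
    c x y = false → c x z = false → c x t = false → c y z = false → c y t = false →
    c z t = false → False

/-- Evaluate `n` before passing it on (helps kernel reduction). -/
noncomputable def force {α : Type} (n : ℕ) (k : ℕ → α) : α :=
  Nat.rec (k 0) (fun m _ => k (m + 1)) n

theorem force_eq {α : Type} (n : ℕ) (k : ℕ → α) : force n k = k n := by
  cases n <;> rfl

/-- The single bit of the pair `x, y`. -/
def bit (x y : ℕ) : ℕ := 2 ^ (16 * x + y)

/-- `M` is a subset of `b`, as bit masks. -/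
def sub (M b : ℕ) : Bool := Nat.beq (Nat.land M b) M

/-- The highest bit of `M` that is missing from `b`. -/
def miss (M b : ℕ) : ℕ := 2 ^ Nat.log2 (Nat.xor M (Nat.land M b))

def triMask (x y z : ℕ) : ℕ := Nat.lor (bit x y) (Nat.lor (bit x z) (bit y z))

def k4Mask (x y z t : ℕ) : ℕ :=
  Nat.lor (triMask x y z) (Nat.lor (bit x t) (Nat.lor (bit y t) (bit z t)))

/-- The refutation checker.  `b`, `r` are the masks of the known blue and red edges, the list
`st` holds the open branches, and `s`, `L` encode the refutation. -/
noncomputable def run : ℕ → ℕ → ℕ → List (ℕ × ℕ) → ℕ → List ℕ → Bool :=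
  fun fuel => Nat.rec (fun _ _ _ _ _ => false)
    (fun _ ih b0 r0 st s0 L =>
      force b0 fun b => force r0 fun r => force s0 fun s =>
      cond (Nat.beq s 0)
        (List.rec false (fun s' L' _ => ih b r st s' L') L)
        (force (s % 8) fun op => force (s / 8 % 16) fun x => force (s / 128 % 16) fun y =>
          cond (Nat.beq op 1)
            (force (triMask x y (s / 2048 % 16)) fun M =>
              cond (sub M gmask)
                (cond (sub M b)
                  (List.rec true (fun p st' _ => ih p.1 p.2 st' (s / 32768) L) st)
                  (cond (sub M (Nat.lor b (miss M b)))
                    (ih b (Nat.lor r (miss M b)) st (s / 32768) L) false))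
                false)
          (cond (Nat.beq op 2)
            (force (k4Mask x y (s / 2048 % 16) (s / 32768 % 16)) fun M =>
              cond (sub M gmask)
                (cond (sub M r)
                  (List.rec true (fun p st' _ => ih p.1 p.2 st' (s / 524288) L) st)
                  (cond (sub M (Nat.lor r (miss M r)))
                    (ih (Nat.lor b (miss M r)) r st (s / 524288) L) false))
                false)
          (cond (Nat.beq op 3)
            (ih (Nat.lor b (bit x y)) r ((b, Nat.lor r (bit x y)) :: st) (s / 2048) L)
            (ih b (Nat.lor r (bit x y)) ((Nat.lor b (bit x y), r) :: st) (s / 2048) L)))))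
    fuel

/-- The colouring `c` agrees with the masks `b` (blue) and `r` (red). -/
def Inv (c : ℕ → ℕ → Bool) (b r : ℕ) : Prop :=
  (∀ i, b.testBit i = true → c (i / 16) (i % 16) = true) ∧
  (∀ i, r.testBit i = true → c (i / 16) (i % 16) = false)

theorem sub_spec {M b : ℕ} (h : sub M b = true) (i : ℕ) (hi : M.testBit i = true) :
    b.testBit i = true := by
  have h1 : M &&& b = M := Nat.eq_of_beq_eq_true h
  rw [← h1, Nat.testBit_land] at hi
  simp at hi
  exact hi.2

theorem lor_spec (a b i : ℕ) : (Nat.lor a b).testBit i = (a.testBit i || b.testBit i) :=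
  Nat.testBit_or a b i

theorem bit_spec (x y : ℕ) : (bit x y).testBit (16 * x + y) = true := by
  simp [bit]

theorem two_pow_spec {e i : ℕ} (h : (2 ^ e).testBit i = true) : i = e := by
  rw [Nat.testBit_two_pow] at h
  simpa using (of_decide_eq_true (by simpa using h) : e = i).symm

theorem div_aux (x y : ℕ) (hy : y < 16) : (16 * x + y) / 16 = x := by omega
theorem mod_aux (x y : ℕ) (hy : y < 16) : (16 * x + y) % 16 = y := by omega

theorem tri_no {c : ℕ → ℕ → Bool} (hc : Good c) (x y z : ℕ) (hx : x < 16) (hy : y < 16)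
    (hz : z < 16) (hv : sub (triMask x y z) gmask = true)
    (h : ∀ i, (triMask x y z).testBit i = true → c (i / 16) (i % 16) = true) : False := by
  have m1 : (triMask x y z).testBit (16 * x + y) = true := by simp [triMask, lor_spec, bit_spec]
  have m2 : (triMask x y z).testBit (16 * x + z) = true := by simp [triMask, lor_spec, bit_spec]
  have m3 : (triMask x y z).testBit (16 * y + z) = true := by simp [triMask, lor_spec, bit_spec]
  have h1 := h _ m1
  have h2 := h _ m2
  have h3 := h _ m3
  rw [div_aux _ _ hy, mod_aux _ _ hy] at h1
  rw [div_aux _ _ hz, mod_aux _ _ hz] at h2 h3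
  exact hc.tri x y z hx hy hz (sub_spec hv _ m1) (sub_spec hv _ m2) (sub_spec hv _ m3) h1 h2 h3

theorem k4_no {c : ℕ → ℕ → Bool} (hc : Good c) (x y z t : ℕ) (hx : x < 16) (hy : y < 16)
    (hz : z < 16) (ht : t < 16) (hv : sub (k4Mask x y z t) gmask = true)
    (h : ∀ i, (k4Mask x y z t).testBit i = true → c (i / 16) (i % 16) = false) : False := by
  have m1 : (k4Mask x y z t).testBit (16 * x + y) = true := by
    simp [k4Mask, triMask, lor_spec, bit_spec]
  have m2 : (k4Mask x y z t).testBit (16 * x + z) = true := by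
    simp [k4Mask, triMask, lor_spec, bit_spec]
  have m3 : (k4Mask x y z t).testBit (16 * x + t) = true := by
    simp [k4Mask, triMask, lor_spec, bit_spec]
  have m4 : (k4Mask x y z t).testBit (16 * y + z) = true := by
    simp [k4Mask, triMask, lor_spec, bit_spec]
  have m5 : (k4Mask x y z t).testBit (16 * y + t) = true := by
    simp [k4Mask, triMask, lor_spec, bit_spec]
  have m6 : (k4Mask x y z t).testBit (16 * z + t) = true := by
    simp [k4Mask, triMask, lor_spec, bit_spec]
  have h1 := h _ m1
  have h2 := h _ m2
  have h3 := h _ m3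
  have h4 := h _ m4
  have h5 := h _ m5
  have h6 := h _ m6
  rw [div_aux _ _ hy, mod_aux _ _ hy] at h1
  rw [div_aux _ _ hz, mod_aux _ _ hz] at h2 h4
  rw [div_aux _ _ ht, mod_aux _ _ ht] at h3 h5 h6
  exact hc.k4 x y z t hx hy hz ht (sub_spec hv _ m1) (sub_spec hv _ m2) (sub_spec hv _ m3)
    (sub_spec hv _ m4) (sub_spec hv _ m5) (sub_spec hv _ m6) h1 h2 h3 h4 h5 h6

/-- Extending the red mask by a single bit on which `c` is red. -/
theorem inv_red {c : ℕ → ℕ → Bool} {b r e : ℕ} (h : Inv c b r)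
    (he : c (e / 16) (e % 16) = false) : Inv c b (Nat.lor r (2 ^ e)) := by
  refine ⟨h.1, fun i hi => ?_⟩
  rw [lor_spec, Bool.or_eq_true] at hi
  rcases hi with hi | hi
  · exact h.2 i hi
  · rw [two_pow_spec hi]; exact he

theorem inv_blue {c : ℕ → ℕ → Bool} {b r e : ℕ} (h : Inv c b r)
    (he : c (e / 16) (e % 16) = true) : Inv c (Nat.lor b (2 ^ e)) r := by
  refine ⟨fun i hi => ?_, h.2⟩
  rw [lor_spec, Bool.or_eq_true] at hi
  rcases hi with hi | hi
  · exact h.1 i hi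
  · rw [two_pow_spec hi]; exact he

theorem run_sound {c : ℕ → ℕ → Bool} (hc : Good c) (f : ℕ) :
    ∀ (b r : ℕ) (st : List (ℕ × ℕ)) (s : ℕ) (L : List ℕ), run f b r st s L = true →
      ¬ Inv c b r ∧ ∀ p ∈ st, ¬ Inv c p.1 p.2 := by
  induction f with
  | zero => intro b r st s L h; exact absurd h (by simp [run])
  | succ f ih =>
    intro b r st s L h
    change (force b fun b => force r fun r => force s fun s =>
      cond (Nat.beq s 0)
        (List.rec false (fun s' L' _ => run f b r st s' L') L)
        (force (s % 8) fun op => force (s / 8 % 16) fun x => force (s / 128 % 16) fun y =>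
          cond (Nat.beq op 1)
            (force (triMask x y (s / 2048 % 16)) fun M =>
              cond (sub M gmask)
                (cond (sub M b)
                  (List.rec true (fun p st' _ => run f p.1 p.2 st' (s / 32768) L) st)
                  (cond (sub M (Nat.lor b (miss M b)))
                    (run f b (Nat.lor r (miss M b)) st (s / 32768) L) false))
                false)
          (cond (Nat.beq op 2)
            (force (k4Mask x y (s / 2048 % 16) (s / 32768 % 16)) fun M =>
              cond (sub M gmask)
                (cond (sub M r)
                  (List.rec true (fun p st' _ => run f p.1 p.2 st' (s / 524288) L) st)
                  (cond (sub M (Nat.lor r (miss M r)))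
                    (run f (Nat.lor b (miss M r)) r st (s / 524288) L) false))
                false)
          (cond (Nat.beq op 3)
            (run f (Nat.lor b (bit x y)) r ((b, Nat.lor r (bit x y)) :: st) (s / 2048) L)
            (run f b (Nat.lor r (bit x y)) ((Nat.lor b (bit x y), r) :: st) (s / 2048) L)))))
      = true at h
    simp only [force_eq] at h
    have hx : s / 8 % 16 < 16 := Nat.mod_lt _ (by norm_num)
    have hy : s / 128 % 16 < 16 := Nat.mod_lt _ (by norm_num)
    have hz : s / 2048 % 16 < 16 := Nat.mod_lt _ (by norm_num)
    have ht : s / 32768 % 16 < 16 := Nat.mod_lt _ (by norm_num)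
    generalize s / 8 % 16 = x at *
    generalize s / 128 % 16 = y at *
    generalize s / 2048 % 16 = z at *
    generalize s / 32768 % 16 = t at *
    have pop : ∀ s', (List.rec true (fun p st' _ => run f p.1 p.2 st' s' L) st : Bool) = true →
        ∀ p ∈ st, ¬ Inv c p.1 p.2 := by
      intro s' h'
      cases st with
      | nil => simp
      | cons p st' =>
        have := ih _ _ _ _ _ h'
        intro q hq
        rcases List.mem_cons.1 hq with rfl | hq
        · exact this.1
        · exact this.2 q hq
    cases hs : Nat.beq s 0 <;> rw [hs] at h
    swap
    · cases L with
      | nil => exact absurd h (by simp)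
      | cons s' L' => exact ih _ _ _ _ _ h
    simp only [cond_false] at h
    cases h1 : Nat.beq (s % 8) 1 <;> rw [h1] at h
    swap
    · simp only [cond_true] at h
      cases hv : sub (triMask x y z) gmask <;> rw [hv] at h
      · simp at h
      simp only [cond_true] at h
      cases hb : sub (triMask x y z) b <;> rw [hb] at h
      swap
      · exact ⟨fun hI => tri_no hc x y z hx hy hz hv fun i hi => hI.1 i (sub_spec hb i hi),
          pop _ h⟩
      simp only [cond_false] at h
      cases hm : sub (triMask x y z) (Nat.lor b (miss (triMask x y z) b)) <;> rw [hm] at h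
      · simp at h
      have := ih _ _ _ _ _ h
      refine ⟨fun hI => this.1 (inv_red hI ?_), this.2⟩
      by_contra hne
      rw [Bool.not_eq_false] at hne
      exact tri_no hc x y z hx hy hz hv fun i hi => (inv_blue hI hne).1 i (sub_spec hm i hi)
    simp only [cond_false] at h
    cases h2 : Nat.beq (s % 8) 2 <;> rw [h2] at h
    swap
    · simp only [cond_true] at h
      cases hv : sub (k4Mask x y z t) gmask <;> rw [hv] at h
      · simp at h
      simp only [cond_true] at h
      cases hb : sub (k4Mask x y z t) r <;> rw [hb] at h
      swap
      · exact ⟨fun hI => k4_no hc x y z t hx hy hz ht hv fun i hi => hI.2 i (sub_spec hb i hi),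
          pop _ h⟩
      simp only [cond_false] at h
      cases hm : sub (k4Mask x y z t) (Nat.lor r (miss (k4Mask x y z t) r)) <;> rw [hm] at h
      · simp at h
      have := ih _ _ _ _ _ h
      refine ⟨fun hI => this.1 (inv_blue hI ?_), this.2⟩
      by_contra hne
      rw [Bool.not_eq_true] at hne
      exact k4_no hc x y z t hx hy hz ht hv fun i hi => (inv_red hI hne).2 i (sub_spec hm i hi)
    simp only [cond_false] at h
    cases h3 : Nat.beq (s % 8) 3 <;> rw [h3] at h
    all_goals
      have := ih _ _ _ _ _ h
      have h2 := this.2 _ List.mem_cons_self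
      refine ⟨fun hI => ?_, fun p hp => this.2 p (List.mem_cons_of_mem _ hp)⟩
      cases he : c ((16 * x + y) / 16) ((16 * x + y) % 16)
      · first
        | exact this.1 (inv_red hI he)
        | exact h2 (inv_red hI he)
      · first
        | exact this.1 (inv_blue hI he)
        | exact h2 (inv_blue hI he)

/-- The mask of a list of pairs. -/
def maskOf (l : List (ℕ × ℕ)) : ℕ := l.foldr (fun p m => Nat.lor m (bit p.1 p.2)) 0

/-- Check a refutation of the partial colouring with blue pairs `bl` and red pairs `rl`. -/
noncomputable def check (fuel : ℕ) (bl rl : List (ℕ × ℕ)) (L : List ℕ) : Bool :=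
  (bl.all fun p => Nat.blt p.2 16) && (rl.all fun p => Nat.blt p.2 16) &&
    run fuel (maskOf bl) (maskOf rl) [] 0 L

theorem inv_maskOf {c : ℕ → ℕ → Bool} (v : Bool) (l : List (ℕ × ℕ))
    (hl : ∀ p ∈ l, p.2 < 16) (h : ∀ p ∈ l, c p.1 p.2 = v) (i : ℕ)
    (hi : (maskOf l).testBit i = true) : c (i / 16) (i % 16) = v := by
  induction l with
  | nil => simp [maskOf] at hi
  | cons p l ih =>
    change (Nat.lor (maskOf l) (bit p.1 p.2)).testBit i = true at hi
    rw [lor_spec, Bool.or_eq_true] at hi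
    rcases hi with hi | hi
    · exact ih (fun q hq => hl q (List.mem_cons_of_mem _ hq))
        (fun q hq => h q (List.mem_cons_of_mem _ hq)) hi
    · rw [two_pow_spec hi, div_aux _ _ (hl p List.mem_cons_self),
        mod_aux _ _ (hl p List.mem_cons_self)]
      exact h p List.mem_cons_self

theorem refute {c : ℕ → ℕ → Bool} (hc : Good c) {fuel : ℕ} {bl rl : List (ℕ × ℕ)} {L : List ℕ}
    (h : check fuel bl rl L = true) (hb : ∀ p ∈ bl, c p.1 p.2 = true)
    (hr : ∀ p ∈ rl, c p.1 p.2 = false) : False := by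
  simp only [check, Bool.and_eq_true, List.all_eq_true] at h
  refine (run_sound hc _ _ _ _ _ _ h.2).1 ⟨inv_maskOf true bl (fun p hp => ?_) hb,
    inv_maskOf false rl (fun p hp => ?_) hr⟩
  · simpa using h.1.1 p hp
  · simpa using h.1.2 p hp

theorem cert_two01 : check 11 [(0, 1), (0, 2), (0, 6), (0, 7)]
    []
    [299495404371902932346413227479169] = true := by
  decide +kernel

theorem cert_two02 : check 11 [(0, 1), (0, 2), (0, 11), (0, 12)]
    []
    [514996417457286876080911926988929] = true := by
  decide +kernel

theorem cert_two12 : check 11 [(0, 6), (0, 7), (0, 11), (0, 12)]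
    []
    [515838216684738826949477066128129] = true := by
  decide +kernel

theorem cert_k6 : check 127 []
    [(0, 1), (0, 2), (0, 6), (0, 7), (0, 11), (0, 12)]
    [841354708634617694795862840090962630905136336777619113474043975052879246842146913659407550657521871872466435111065063488031711703404762880786994340643315673124016956372503914873880309132166750506342330922789014348708233078599879792165087178121280280388676586577501499810740,
     53741001308177591977928168114251957002927505765838323057975159219365334433424452216299541808705475715736637335087520748807090757025985823992052901613983693577251682388809126093778251394134761128060319843883695969320343495861226166233233358859736756249216490225045521455234,
     2057461715702345223444409797594995458] = true := by
  decide +kernel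

theorem cert_iib8_13 : check 11 [(0, 1), (0, 2), (0, 8), (0, 13)]
    []
    [547955395929724715772974884491393] = true := by
  decide +kernel

theorem cert_iib8_15 : check 11 [(0, 1), (0, 2), (0, 8), (0, 15)]
    []
    [629085189091558818739355973095553] = true := by
  decide +kernel

theorem cert_iib10_13 : check 11 [(0, 1), (0, 2), (0, 10), (0, 13)]
    []
    [553026008002044190300393275691137] = true := by
  decide +kernel

theorem cert_iib10_15 : check 11 [(0, 1), (0, 2), (0, 10), (0, 15)]
    []
    [634155801163878293266774364295297] = true := by
  decide +kernel

theorem cert_k3c5 : check 260 []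
    [(0, 3), (0, 6), (0, 7), (0, 11), (0, 12), (0, 13), (0, 14), (0, 15)]
    [905238720429206328050688907467208471525779540157051049964342491128096153211680271906000456810704677804582451887010288417206308815912999093119695244633814542403349987854581025943927075203853560270780828345160470294947658091556629012680344544793563380444210515798307341130675,
     215728385056515165079949873407349046823692099051749023907266673562247479640028277919491013213609162800699225754875454956410059784561483067517916782811730706751690342991952022638525380543049359334664187009624906059950793705736453274410465863781793267233947618836652312201271284,
     121614894030816668489149193285141817900074692429052257841293417065889171880916333546535986286887695563121161222392671736742664294681275981994293256581210753586983769071203032038571987846835401118333296771259724791686488245978792329757382407938128293343123490926754772389555,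
     17003537547257990112314994195137294913723225231284422462486693837474988716422166144045894030811230697408246501585170435126211239925616269583648432787073774570796864540293863673316176154174292018514662396609951582830989258467837607601551428728133445837022076905597599392199042,
     284291376270225141287082246168706507179700485168585065798760021655167844240522666992092305579767374990891362556358279289218] = true := by
  decide +kernel

theorem cert_c10100_bb : check 30 [(0, 1), (0, 2), (0, 3), (0, 4), (0, 5), (11, 12), (13, 14), (1, 7), (2, 7)]
    [(0, 11), (0, 12), (0, 13), (0, 14), (0, 15), (0, 6), (0, 7), (0, 9), (12, 13), (14, 15), (11, 15)]
    [664044555549800363159105305048290753637574049036317584064388192501968759711918085299431102858563115656461902057756541899903105] = true := by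
  decide +kernel

theorem cert_c10100_rr : check 331 [(0, 1), (0, 2), (0, 3), (0, 4), (0, 5), (11, 12), (13, 14)]
    [(0, 11), (0, 12), (0, 13), (0, 14), (0, 15), (0, 6), (0, 7), (0, 9), (12, 13), (14, 15), (11, 15), (1, 7), (2, 7), (4, 7)]
    [216472089332908041298405717003595234434704480468902924494925105494413986996891940239498075673392970755752387153728612883144170999752407914572458847058682430498013744743234068147735700841077276117073610994171767631637904760962339847719253477897947462725852652581813727487103105,
     60840474496548661928257745252579843202503590776720505806931710492331159424187812367083492797720461784522912848179124122513920908684637012513877443574454270657717823780563256341299247079395181729554766095631617087098758175092170452872329595762069436193166661358501324285321,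
     215663974202653137466034289135374132710363172593320483105133829528254525689253571445929014209017622277997279688334699258854118359781401114990472553799093843794032230658156521032025051668212586939411091979277783787580603411500753603209198184983653151721707161520716596592833577,
     571108072705017686061272157820389853544265849046390933500071892595739372595662889181016101449803668297542262280016445671973395533413364359917507190000016422223562182302505319659762105102762114653567254038767674912280991296787894932635061949863661731479773813471552610820873,
     16855714134753771658566830409857857733020358640649021294812058470637948935057038209669696127696596615970647785907669459776040303041267497563181244184569721982095984102275421593826004268119223030285133982770066405291181429425466303746359376158941279025110970977411386129105794,
     432490952388991004880842061348185300913523779679678759993539868817946735576258537788641852915568448278319863357007382208544874391991035346180745949584392572722291393805708947858] = true := by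
  decide +kernel

theorem cert_c11010_bb : check 30 [(0, 1), (0, 2), (0, 3), (0, 4), (0, 5), (11, 12), (12, 13), (14, 15), (1, 7), (2, 7)]
    [(0, 11), (0, 12), (0, 13), (0, 14), (0, 15), (0, 6), (0, 7), (0, 9), (13, 14), (11, 15)]
    [1881223083689709243599666938913136839915166023051535852722968703092756991441894569914204627248185587132300322746211355168897] = true := by
  decide +kernel

theorem cert_c11010_rr : check 254 [(0, 1), (0, 2), (0, 3), (0, 4), (0, 5), (11, 12), (12, 13), (14, 15)]
    [(0, 11), (0, 12), (0, 13), (0, 14), (0, 15), (0, 6), (0, 7), (0, 9), (13, 14), (11, 15), (1, 7), (2, 7), (4, 7)]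
    [394032599882035180377884662853738477926758258037060456048853897110071549068375060124820776688816673539408744985158793581007552906231627852380596875860427076570316323197845449642109997008702428075536009235333423684892155611993310774453660991459649241599339403173228332486785,
     2148861121528301339732878865755766614463065866214343018003381682577670798106578303596790721041280272122839745682875990714952486306517878994047615234967664928664199047362202412024590730601688117528928371253265092148263811851722669991594090708865947856037961719642899308560833801,
     10859965123127812567515913993943807372564777365570989874749939971744724983614954833970153357606087445368103520272811574623725204290505796639118216878540212235683047794683439044305547388445286208033786997182589852343717347273996167707922902116985068121868880601779299037544209,
     1074087674626382982445909062865659910345403503890543475523749195796698682360643823908536434716699068201102469639080387502284250535909086954299451898409305948062798734440780564497925522511764871097866111827380217648320050527227869554159582953681065258621333709702441316308098,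
     457974894469550982144010691808791258652757717051859056783896086483542181097193874] = true := by
  decide +kernel

theorem cert_c11000_bb : check 50 [(0, 1), (0, 2), (0, 3), (0, 4), (0, 5), (11, 12), (12, 13), (1, 7), (2, 7)]
    [(0, 11), (0, 12), (0, 13), (0, 14), (0, 15), (0, 6), (0, 7), (0, 9), (13, 14), (14, 15), (11, 15)]
    [5231713625752292560456270274749341004303639057035036646010956746214335451277430236055722240155537959393638104532837721691336265300877233562084865716811391598961118734933604316865624501572679541271911089862759024582037633] = true := by
  decide +kernel

set_option maxHeartbeats 2000000 in
theorem cert_c11000_rr : check 657 [(0, 1), (0, 2), (0, 3), (0, 4), (0, 5), (11, 12), (12, 13)]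
    [(0, 11), (0, 12), (0, 13), (0, 14), (0, 15), (0, 6), (0, 7), (0, 9), (13, 14), (14, 15), (11, 15), (1, 7), (2, 7), (4, 7)]
    [127954469150943062316603947031624721146573104702384532786174309508020836050572945319376909649914620149930901211710179658766208462395007423973012630890519815896020352801215558947235414070867056670123420622129156119754645308711612134303210489388179297473840146361306590260269185,
     13149929111606619383831049135938670223439905881502615233567164186419289849177232668692447431551722658529718651212338411425158350368612810689013688414387797578822190284525643925163658364466338239971849956866586394952994169722029961439632326381868741708212959267740743693097,
     998521484995879835591586864763623370145219145729001190633766432671191036252118766208058786599376119347797927500688255602084010025624740334423759095744598532613946965506773082752044951862421899855553191541431871276665604537381042428903625676008127355195710898421279153022353,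
     779026820879135046276843357010615277269461377324102804395373906789805430121396992545198559080168561539218418960325802582964777046013749762763384473135615380549077544687017595096749755173090695679285168099545988638665397231533276713509065073959989210259723824021888836581642,
     118237236428861111085494579919524357058683142589339346619127275414226978918239123024561381159242801164599027051817633612364021906912348547990936945472641861564323456689146946768770543055250985300154233599998739787873235121241095702771853000292754792848824812118978974484161961,
     16056023408311510160683227419007320607251241081766379221547379613390229526167034632169016057778283404954919696813011420513621052668941488512754828564318478687757155585561457295438478712504055329927196589821810692568209739944976547430223992335783333590269654229804752839863554,
     17219594450938254666202081524237706405420358592272479428187063082953816651458336579708535678962341402349363271145403012489746477496349130657547877903654564550473148784501098859958104747043000424411933699608954597309646252841878443360615664419370751874272189048872352548275074,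
     1614817440567873997477429247807398014968627970744678304821979683974488647818347911958748231156193470515440805295522572119775597708341432465054412585252454480215579532029201832386437279748626771190094822168534815802433406515266608367457987253044675857985620872377193196840815875,
     5477880398780430811662878519523943416117342977672657573877159030684582392027218338419165664934246195797842380144720646398266364622990170693338506364427999755323803065660133060778034369060603712955092663419915084072852622539002533533346013738922697232127365453077582953635089,
     977921479160732669921995071466009824212453471826834583097863211086687017364037457841441681478957561294869396732355262259598723118932017159983671202524555755818850978066969697367089460074216106978286712808213509434971341542343722724067964690742220095192066816281524125618561,
     1890173820017192937361618646886409763239592019431265297739151129585320304464917466267542769569805149747736720798218869880907955093042501624212716800691938194787098257384976756563666358279308612200614771559443725420634343411949358191644285648506704641615387830471300303567289265,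
     1121058476415444082832920943902561789773250317119500354071713419285266] = true := by
  decide +kernel

theorem cert_c11100_bb : check 48 [(0, 1), (0, 2), (0, 3), (0, 4), (0, 5), (11, 12), (12, 13), (13, 14), (1, 7), (2, 7)]
    [(0, 11), (0, 12), (0, 13), (0, 14), (0, 15), (0, 6), (0, 7), (0, 9), (14, 15), (11, 15)]
    [1234702219993912460656651438622452918995597486386043274220083104236300899749358984420044525299741189044763996510395831698974008975419997458448726059756796918596267768874181499062738096702410589685544128483457] = true := by
  decide +kernel

set_option maxHeartbeats 2000000 in
theorem cert_c11100_rr : check 715 [(0, 1), (0, 2), (0, 3), (0, 4), (0, 5), (11, 12), (12, 13), (13, 14)]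
    [(0, 11), (0, 12), (0, 13), (0, 14), (0, 15), (0, 6), (0, 7), (0, 9), (14, 15), (11, 15), (1, 7), (2, 7), (4, 7)]
    [26194096134300492184551006362074778066556609929430291248206118506125913182578577696581279745896427683647492829555934881744357605673785738652803769590689476925078901729945845386641604402104267209612958011672895547153838379135508123802037258255687198928305316141581840978049,
     125478084073278579620013971510258683484483274831620094810187596450783053823603047375486014506835863173502278448601530482375878478660187680051770615239990690657277300079771012861889571843874500164397000539510174150331273787404481632396935243009607191040374513685554898256410,
     3421324495884685111164728832088487874966413072927163604048308759427628264950169476285820391116160649496957013796525843868545724068689738987134693456571127329623998579751729243512711520138284456782724057345248919126629356304587623400671362968122585502800536952133787595444043,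
     16656974530135772718203257321369262603919850944820690840011704255695973751733525626501040760658426496214403806455885104786685534519925917573080365127145031197865248651179221342711761761284294274456526642815935687200658361196774652197350851715992951178358737618839550498296482,
     841895916794046230109850479656690692688002399591233493660766430283124595596040302178175585899727667634762665769862858986340119449164239756535854803166682126544808191266341575398271603456661751301160635414988385052324371115281510560603622626547754933971843969104597591299484,
     3229635458764635770304591785347612820090117962579757839514255134459465388354554684108419868410211407522084511645776893904290707330597104578543401334236487866145044173319169425868238841259396658320626380087915346949643934417338570180177260490721921385775743133346585451705457433,
     64013182398332797560618155975189876768777545733181952546180004722602986613612032433351557211367831740938141023624935334853403220653381266523851663521681739531518022471050438995684995963647728688226002643858963537825608950148711458291462673429505342133790431328832960548689034,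
     58182491611635516337197443810302446502414405926402580364246850593686384705241870975665133273382095139023952556800856339874428897142263715038007051326906274754111617807842416497805864269798861237425603432127939071597678519661634744208130803407879409239365610950189210579618,
     276851163366975025700181488687217066294503038524631418188444737783121254774102959295546859578566707994636804517016064691846547095971134431687700201968339231895195171722785397424071225340062366380436478179821531612857531604499038759444380860699647104701759725563932583506458,
     113687141738032846076586502758403961160069290068408374721871486308996209457683793947744820108908403458350048479646357231544729203364850739091412687955698462713951735800860571583540118639131230178812213280406734108588533054815198473069950806745808750101024074140223356846593,
     7898194382839860444233769888840123878151000767188273729243377300354702786210248704033952704161022307696427093571862104369319885040138458645451027400422275668484641598175623244012328182121960038950472292227909336142605347165494432007935550064920786719241658925785385184147994,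
     990557667852839470920611494473237815135762226870598700674308362597639301528687965326880197832889280495471208106651827836227574601185678199421454775947943860389266503034367876111212372407265170103769142226952295610505958455102203397391531626015688049475539546389182577855490,
     2601209416323691748418843154792845379703701928070345986] = true := by
  decide +kernel

theorem cert_c11110_bb : check 43 [(0, 1), (0, 2), (0, 3), (0, 4), (0, 5), (11, 12), (12, 13), (13, 14), (14, 15), (1, 7), (2, 7)]
    [(0, 11), (0, 12), (0, 13), (0, 14), (0, 15), (0, 6), (0, 7), (0, 9), (11, 15)]
    [457578417533875424360982938832094731273415269080296576087802278325996392467890012145648365726635324744321477583936360766874366803461788410164249235791633360290648941219318174304815681665] = true := by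
  decide +kernel

theorem cert_c11110_rr : check 241 [(0, 1), (0, 2), (0, 3), (0, 4), (0, 5), (11, 12), (12, 13), (13, 14), (14, 15)]
    [(0, 11), (0, 12), (0, 13), (0, 14), (0, 15), (0, 6), (0, 7), (0, 9), (11, 15), (1, 7), (2, 7), (4, 7)]
    [1062934588630500915169357898478844181399207861788310889122930280974270888464600981064294919174457043918097436623196691597608386612553639152824773950827054975610662300474881233534439304409361368113986479098383804313301914196447439889754061971589918893111347029260251011518593,
     3067898801556467585703983088209382110477220882884751045046136607592495510261966246105632840043959239872260027506646633431643129350607826493384023899930291305938717542911494869601040613913344869138445337959526900087653406132928228076285750654183685407334182002783336679204289,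
     272178880895568944453423913072780660003044500090648115476351035848367115965780793658820012207017736037737254051721420091708041053144735914136631730998090611827087064688252821487949748026142951887871880442137697322691047057376767899583960287425993208252157168809628479842999337,
     68758525454806848412480299524978666893705796542698707983253004562301356466342765434021486444845502300054370060930548135135754518304889257976035465001629680644938509380895902341686702215700509098674765571380159445882081285276679756956638493687548216616475860488446856258934668,
     475674] = true := by
  decide +kernel

theorem cert_c10000_bb : check 39 [(0, 1), (0, 2), (0, 3), (0, 4), (0, 5), (11, 12), (1, 7), (2, 7)]
    [(0, 11), (0, 12), (0, 13), (0, 14), (0, 15), (0, 6), (0, 7), (0, 9), (12, 13), (13, 14), (14, 15), (11, 15)]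
    [405646161996409871525055978405176402942526849517503576633009942554823798471113600836151554375438871700896141771818213567533945184571358557483912910496202936087320858753] = true := by
  decide +kernel

theorem cert_c10000_rr : check 380 [(0, 1), (0, 2), (0, 3), (0, 4), (0, 5), (11, 12)]
    [(0, 11), (0, 12), (0, 13), (0, 14), (0, 15), (0, 6), (0, 7), (0, 9), (12, 13), (13, 14), (14, 15), (11, 15), (1, 7), (2, 7), (4, 7)]
    [6271957662694353974420845094212066561121267115479534223499724453757661320676989075772219539613970886541661490086066836176221404700864954776148407218453633442940078939755059051603550427369790456843035099347320353013833645683063649417276281872190202369709151056013895611224193,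
     351211034557332682977124357330444396728823780484478780957276873323504332319691243967987956105834254109897837389250717105594096526825805012127859106168345195257637295357746851373297261383800082275806550962243649660897459321351551068820165796470661856827880962165529071574146,
     859063442560463614468011452479849366621841734370350090460191142429545991655531582950622280748979724150960504611534485049724289703353414606303894402820190913525526123163159657954144632404818732380462777701465701331162340708389811684155100650709441628780044107766166044865841,
     6276064760399474442972140207669898958200017163261971017606487100048631441476116988630107145841486993043629197888281897563683250451495732214890677947729859255164345465708747977279495594452388309009192553028549667919218226886713800850250146431608467685300104743518285373258266,
     17435279404357619957057246330674552682457366561650636569152944157097895936319376957241132026849470761416305350488255349135197514348676100722282786665871331237199298050253343075852654665469794634807449048664865252538006398769175156921928101294587667617103626456710092540930,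
     216733244671143981299317269685326036818558725275307480156483822869711935755032694576300007132934363856092926911715665146439217484737774796317592952022434097120924486085988024395190363987202729691090274035554627102663350485342353868801552438519371250886628492716702192439476865,
     7811963225143110468164630261769594910970111077452505346441982293027396664815239809046635354450980034877248090934666657] = true := by
  decide +kernel

theorem cert_c00000_adj : check 5 [(0, 1), (0, 2), (0, 3), (0, 4), (0, 5)]
    [(0, 11), (0, 12), (0, 13), (0, 14), (0, 15), (0, 6), (0, 7), (0, 9), (11, 12), (12, 13), (13, 14), (14, 15), (11, 15), (6, 11), (6, 12)]
    [416514] = true := by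
  decide +kernel

theorem cert_c00000_bb : check 37 [(0, 1), (0, 2), (0, 3), (0, 4), (0, 5), (6, 11), (6, 12), (6, 14), (1, 7), (2, 7)]
    [(0, 11), (0, 12), (0, 13), (0, 14), (0, 15), (0, 6), (0, 7), (0, 9), (11, 12), (12, 13), (13, 14), (14, 15), (11, 15)]
    [1475732140521030977919248361665420093878203071198030560089246245616170277175291392380711037649003895018883319056846620069907578615733263919959991292752957569] = true := by
  decide +kernel

set_option maxHeartbeats 2000000 in
theorem cert_c00000_rr : check 768 [(0, 1), (0, 2), (0, 3), (0, 4), (0, 5), (6, 11), (6, 12), (6, 14)]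
    [(0, 11), (0, 12), (0, 13), (0, 14), (0, 15), (0, 6), (0, 7), (0, 9), (11, 12), (12, 13), (13, 14), (14, 15), (11, 15), (1, 7), (2, 7), (4, 7)]
    [26185106459619920463999696519593453959565450518648850199099123913137256691269792846925549529764941484679736706285520599921556653600203115186090163962646226679786716374590383773404924138440943701348646045066793747165620609872956899555548023790013343299905855590644794298497,
     782725245172005054009900806129497176652706793161430421277236506462690894027174599908424679914610473244901505993197356835471437035108906927540779047814517770013383893163375043395936542710796610386141115859933883899712759761336465201543284666174183368083660725306553004868122,
     1721195103018605956056231505479211281125043955472433638535045672100321195844640863858207267080417240530976066595422513464642722195944017476892590355239183618794942564837313241479942153023267817328081303042625089574852647012625439378504170214406796241048635586026765403380929,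
     396561748739315674038676324231796036634504132578854758548158045435126189721007549866864615929695168933377509950074820141013362082123477511082417316472552652983001685471898802874221624353667144420405242988763534711516451918216840577168910786801216827356438975890759570479310082,
     13295059485091285929776094404067185657286061667649237088982638335418929382653330287303715745685543106708294570403060473267205627662605683305403074197684493889467812207445985014482354352404981854587366922872418728276082193081342849037498801460313374278390157115266004048410,
     175741917193615274969513070300841757972633566919889636676396290951745680752296707836864568204738777125095256132377182081705644057261706913692144459212700267123259832254216292704923113109116945882739583186692450255491462722679805582046981865887275459959547930100893146270346,
     43059365883229273694653129426021348509209033341139288553582334935398293192233702966298076149381790051095963399292080719169720653764804757296351667396029916046145545094873661319240552971173160100793430941634778112865647037270681183391856404196977312550606591147983665945889,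
     854047242559605064779552980049265409948058900840752662911895878761829772585646852994576222852308500740605745337240370856145081167859985182060185053566155661861926561025974243289750437928503852443250770757407111091137436991204360395136988290864649649591890667546101367755265,
     131256300469365659981504639339682138290405278252236730454408829397926704564250938222641781725391503107194898588520514639633967125504590793875860451857895297653506020469669460462843088709817887202473258455343439981325692551257670610624415737027426477204878137420980305618217,
     13041672995770386723043452096589888269132012902122460339996388817138125319669385424925664426392306878034758574787312209303576928687854942404095332656341516711444932239479096833183987568898888855130348465724134230890790761320678995658319032019334075652783315439314059915666,
     235066509347074143031787105358751296300475180295769726830369582407816217980849852315088748443680388407920476807873495405916293958296348720595289944672164205404705465577626305703916619710312654121192390106730123861933491870804402520968236309731408643131000067988581744085623593,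
     1721194845062291940915884192616057927720259304095565975132662175002540492789333513652640297669396622092337442419949829335302733732893838826623803360909606504970008286704667299582063104673752376898830784950174012490980417668886119777904296763456892163871552972056636905585825,
     431327754970338907988028058807338056719259521452108565746534187765470271391850056730798137119146392141040066764456746901829469017561107559697841557633784003103732454951836298760947337006265476364100546438854884666358967435820572498511436234065551108107248564165812180866817282,
     83289336528043434693855670450527973857786022132965628475246489904213212137758449039390342687014935202] = true := by
  decide +kernel

theorem cert_c11111_adj : check 5 [(0, 1), (0, 2), (0, 3), (0, 4), (0, 5), (11, 12), (12, 13), (13, 14), (14, 15), (11, 15), (6, 11), (6, 12)]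
    [(0, 11), (0, 12), (0, 13), (0, 14), (0, 15), (0, 6), (0, 7), (0, 9)]
    [26033] = true := by
  decide +kernel

set_option maxHeartbeats 2000000 in
theorem cert_c11111_bb : check 614 [(0, 1), (0, 2), (0, 3), (0, 4), (0, 5), (11, 12), (12, 13), (13, 14), (14, 15), (11, 15), (1, 7), (2, 7)]
    [(0, 11), (0, 12), (0, 13), (0, 14), (0, 15), (0, 6), (0, 7), (0, 9), (6, 11), (6, 12), (6, 14)]
    [797688779420335642787465457262961966305370759920798912534812724297934448233049305876868309396662120446260495344123724889557588851354364505716238790485166616482716179420435920665372529028583237019349368907222979368720278324686801021342739710611970906078115362504440721935732865,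
     1568021897261138634401081891474148137161827383738242506335456846612288429113645852534045707109144509463485267413912223753465279324479976635245690748635551508087350265307870905511583224445128194183578825978977337342407642150243882861735072977297729325319844865620300938661787,
     29780855049889571753141458264834544750670962806106924365207234581119096676414410911643386009257867276974385787124945904316163467359932550744219538444015250000351510102541127138071666101914293812991515383439022846540420911303714595825808505296588607693481188746083220193404329,
     1404844809578438963170901482664717066579589732199818743140140918593357692896919171965877679659462153985290599916679332823414516243594100453122313069356212296637807838542408634751701783698647734971912726289282589650486329724541251594871481444796454640871944755697716624769426,
     12586966249063884395983356266244288441129943845462198792820971557085470873699956014265168972204684619836294240643504844743777121646756237237205496479053622181104187944547768479249770754021851042913890049766760347069005386455452979307353024782664201724546175792269738025471955,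
     234054205219888523939593635458162648507386018938153565441458655845912367684506560682850704796949783707504104856986739626445863879589891591033326582131837763644729821469888976432218516398481826507616186166215688063122959050122703771470065184690103038818167263568402717408151818,
     1700173896508838717837039624317111995342915518700131636153320555929762818708197890515269552361579941654409174854011951913596583136844307013378650583288120383397229982345132516412531823249706863635714300104478987001711597324139393386264142349772509795238916912586610669088297,
     265748404612172429392518960371564654974772909059244141487001590420630971688184122238393863229925293849584981557963657319155714393029329049278983863297298386609955644081215979432995157852773066046453285478013536777970642451443559081243412919785553703458935117562995718573097,
     15765252182102992471622118477359823970087871963875326582174779942777461779151495522047512565369661879408058367582043186747823224466696724626067680228852198102866391932185779076359417888663267329607514268865617243013893139098693945922805903641156864909371493764550009167073179,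
     4312731650139980739270572575443218959431315490171416431440390938523489104824433566910297133210561947484711818176265147732689372506324867500898324800662042997941915389936761051970260118161245434049467704310631254630339096299741128902836500575035334242386745143229366173011267850,
     53500467435940657118129872120637743074972302827845876815859612373352834936802664722448715591024924254901509106131002265864192066981775620315501092551948366672607299986] = true := by
  decide +kernel

set_option maxHeartbeats 2000000 in
theorem cert_c11111_rr : check 2987 [(0, 1), (0, 2), (0, 3), (0, 4), (0, 5), (11, 12), (12, 13), (13, 14), (14, 15), (11, 15)]
    [(0, 11), (0, 12), (0, 13), (0, 14), (0, 15), (0, 6), (0, 7), (0, 9), (6, 11), (6, 12), (6, 14), (1, 7), (2, 7), (4, 7)]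
    [1057420699950099368692016469422262388208705021645607605749174159261125245426674698178629276144267094736261435796933166822075974596871540121074135609107346202982695529659729973800089891349516023071581343570206590009937008990239709436579181895242561947997453145600781166088321,
     15668228631879568090362121689357832755471319092798448925851320447850812212007116872637628961588497137127525122469820177606291001610339106173084818826264739862899506069225156620089119522086335595826786513825484885723344236502823375437134784555818519261574447846767832584866,
     944833483021227448030638493184947037892696645528093563481736766311448777240207599638704367581944579486182712730757439647011862665335129757815598438439673665092929725490939463089432687935509334901587483503282950332435604106842103691197284170638998750271995643296120606301278746,
     930123416555729112424731350931963140005802569000425182356834732300302358942646300697461648636008139249448695241160476394294085423567891234739743007509607109574607372122835928114352202712885725660065983662110782087912727314469414828819762567206394222349880954228606294824244,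
     105727723258643213856923013463579849553014739712098834683180797621408131778918250075859218744715151159675209480056388537898345985973737322139390484463655550333403777505462399682647240017725432926902432053643061889330847800658098701492318649897607778292860064011523694394265,
     125684117134880725613292716981326786748336233152662618919192859744549927092419591525479164943459283881131543076409947821752391966346985134712748941669001495281226266816204987661557516871207614117546635452535795854408866019442787834881906528098229502963449468546219392218227769,
     233916377028386223160496512293947048660194411057281937225309961980667968991538045678345400579731199668931899189298412662735241215564791807141423429259586387364564393631753358072145895621380927448723013095646505123164893376485778937688531095660668220106434630745277594676290985,
     10078099436522001014388679023405336225678556980010655072924202088918034027134981347456004791010358920094459344310827704777627445678405607178117214482034062912222116784154462953629434608564250187311155018979302160785497726895751590672249367916533329020468599642984450800018,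
     3996403137513292977872388833127497020660975089725109838937386179848196786388606871778601197237311243101114990322098274193746621037361853088797734838416450176624840200860599960337469975336881731344098689497416312766449404425714769265964081180788111111563892865983523591212034,
     398582140461888523953044088084565890232646894217904255726520491150715922086493586840364402528893156845007028159708476897352806149218759436900110499149480060761463943354751793226845023749315048682499955477291233301627563465544735417553532763859272601835173650671213724291613593,
     219920926326244269075990101346852936737557224195909370507565411208831521484720843785771305330790024223559738564833706173746868358413682373453489616968620207612116039039366611904790650282910732248984254132890127855881767862804551563130460497525209160954189976101845546459522449,
     14153624197103816463891342279814632650657663700610716163496884765918088960725025469338125243675624818550915262215037125367888675431026879230644143742515075823449051745047922701552473245032649089016212955732190042368327740681919740168855620779739938004629053709981960222986,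
     10042735216934795322862062300114605723305026304717584627311694973174703685803693336963106867101811976396659740861601512512969965432616616096616420081438769131667568863993294974887685644092487405753104926230920188856367168509077845232150552411253169942235046228340507652770,
     113689916566640737424822811472276720963367461023031700874164032199092621395522965463233646920520065349515960668861822061669056791971650202062247649263795427695775876288520502129751917316693833564812187040984823180895616795942153128435482005743578418091782857303099633880475,
     134292721369619113331576995274757568054530118825597291528020807533504882381969344476931777809565904641504164667491855170554025861715650518224182108664083395259265571476533562634783738031073636786007901793274717024347206917339645065695042106428314048347018164393912459652633,
     12383577784044571160384743259594426004971564617904044122275040460725236557038181843058167225765804539977036437468921930255154876549548514521901227434087839379184714334500475943354162150409582112644893606734670094598059056687043153094462692959895950122743762756853836551066908,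
     14281327133886656671702711509763811629550740063193323200837919271926883433317185104619902061614823924820822565878404416842058307745043972247454430651719971175844252751143835183841170263481879469306109127606891413793735177749038612380660434871324085203503919681628902636170,
     11441724942624171741155989560004819069973248334584576718811541461169631547182554392394197846811742013315455507172205886280925318987995150096701558106642400760686332862880257925780673870183248754121581379473097326004150215837685559752707847592371868589455352706564892776256273,
     14484340696328758013093133987276565503006059169445192466379731601803437229701456606270876333574742921591893297225400864277375191002703863692248461217177954663814387459249621806972493450333555883463224272393396739504892562156481803518890478525968169656073358752697628660430105,
     1555941010861015373968204281826515847024000109006216996577769772940633236716791066674602455084438492630557699534489918222462510565902263695652147718430072458576906833680663752891988821621639173458961415302318170278313401092046013993521502933962819443232781292311037312820633,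
     27464688533375721888223866971473401811498062246693787402949594754740690314717365698636382400874661619426931906025908036409640420865367430606828930583949110509510039852816456684535220050059951992150380290787356381961608567174662830508492718069985068016047420659857018883234873,
     114279506285063708258425408272197617526156044778941296527107892267623308731846500594200473088907674306159438617261028708628489473468210255349886025878760417660177569077841925544554291150244696494730224651170259455044641052997953694858573767995168458006943945457573155923369,
     272259569159676863669299988531062043110325216658802433260513534315470393697372140199094782016265390869376464670805149436515453606111033871567826690814896140796522439209500048069988183436186293094798187102379820044512320280240181160234439849224934702437719390477288065963709193,
     132741405316285048228828219820093938425779380159463202864120551820371889913855970537878743776248942556220053648836537186585788953365762248936289951903685427019538862088341178481266045795778400014670926421835874598502853624317428719058746965177694926940978562474649519536778,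
     4298668884811087505512234122459762310010693751285752953084874793296318667088445100250931522193564502844738475197098267983109805806017467935205861977507070556251337557222809203965772145304517642533992060949771010880651065539041948412894454371625191938707271776124286394193695660,
     128024166940720784006915991015421905175479821356092895341907820447339021109952634604300051512493432671951916612882525091405592769137877071838249280043004903060842650565469487210496303097376128415314431001282919174904646865511359085278175858296072241534888143111406871816491785,
     1710134227505443178261301981861956911292595618288506780948921687534574196122895938738558880578059386581014927956748614230071140503497219740214045364754022513242516144645029575144109145661167451086216005045846347161999092512422692706894587520122353432130928675921821695263657,
     3205968411121621122325831877223641020190063714202099738080903011027238024645462121497312909485504582086940504789491747382837810402736726377718301978212986143205971614240405194629371623509792535783692320944968996220190642239729406592577527682744945444099673221373189448610501146,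
     61083607622092435890542771218727281977146887760098484099393497782415674634039343421169456757479507088464500813021143080930375393590343174776900063755888598380109341288113262188381274712146392538650250605718128620825062261706001321830230284543813266828597476017799619499161,
     2005004195013014225774733762011859687840181156577652821471279927371300736770763683523193368608697218792428133415890574834822342260687885797320001490111845557731703991922638297278157633899834419243632792905722033062061560077922940075165935675260592514286860195080524210321810,
     3481797899070875460185827959346175038695234721594117066914375095630928703222460762303366901973152755367845476524083139214898506553570408215936544087680395976743704994657045641376507657386546437130801448549065677152536157418106767313998559683776193091662220783667098443834118682,
     116298354667255197458139773898931371516729946717113504591297894773803772825213400023637932331287748436607955750265492247689816355102160164425547216450946777597791501988327536751137850947422243246948968440091202013949343648621520933763468598315247678088255944753415893961378,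
     16995217173651905385662805534689323934447848364449063881670548457471845029432114699612867031538017903914645239449143461650584267406345597755829535621820609510831871737972224300109844192114393047959009093271104346374354102685917047006891790583657024844010906713606573022082705,
     109454873285733165974656518240427472328947814127639492849242270708001425858551375547887439594391511019218230261429952882077618585353088586368428641856092641961679741301497593182151158133267081511152058121480152490584089118659416498822961412209952057174452107805925372687858473,
     3366383400309363818347708106793040362407102875325990403401327960708943941489630481112676402386683681078600665704323375543148973234869529617714363262387540776217002569112412572972071796541197340369249759392176513308593824383005931895619024633560841591325732581798804290785954,
     1810045957323032749511823379693948520682219521590909086638576367238574731968523842896980908657710993568481014251532786782242318134055634844227839012356239770638617810737627673392863559427890621003459343098816851299781128635213774587029835767421875457465962803558432852304953,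
     52618505095424867874724455425438018863291902457989128327361820510896674488849653395968473415593990191565450683153309047169240052630637014452612136030719828340149342602579788226514864469472153478144734044401315302475573561110993189662505356162521146812656095660580809591825,
     131649292835851473405124833056653071988873735180164743833613565369873958993563222423089696902714115168030311791017329697727986000040562876560224047757931288230552711224757563091943925269414777587981470074793342308126450842921100674118661784765093768987678314107002057279890,
     13088277536732117642553966867346140020515546126277688281973108496407249531267642100004458487968740111237156946338658142157454601600085588231519865643980597002466069982322884144003136316958460003479455816467077787475857396654714648863292323052827504155806871040371714937234,
     44694496013701091517241138561939688823231897667925800045229408132938152236790556384983147879738170499353226994257136476144073255529512689517159851275169807527488012152673414107359205068908160928928738640918049171657969829694839651064442646301318608381936513597954960802194,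
     125612299896395922916521820926478609716692758739254189780254163081936783415950367977395920804343855715289507513481210674419351042263703386472588172064897857631094454737008051536768856178775064819964591378345730909120849243682151554514597103666591553248789559356219595878189458,
     256639513576701607918913780660073975959166590246244932542090921195827746752122832525495834886346530597091529216158294127466031308131446947605679616894105530889804659278840121285818995650852151180535525971677698845448654860630400531871268699056444318491511334531487788519969553,
     13294386796577090439638118378900862702669145433995947241278012703662807302444284199522807539566821226985664651576202186713124688077791696226551918261300820983717684666424043835529572239052002892525661631956451095724565486242563237703637913580307790459293379897781550203282,
     859856157970233122602901784813538423200142674739467063948885043943307914808322364299507908892781659906327724409830456321295414931737637041995955174426183385837107232589579312594891938564107578579650128702471520444062980487817220788661095061460129582567495687189673815594924,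
     122668261617574143473165848163591416976629674852294177773778998874386103422637108444659347465904965035156787395485972881972370911216040934549996298591182084114702130370133457296808792351450765663355808083722701352929557396774063726675829978775166520634699078165403511699722,
     500091563419860491908929744273176051317437238311873989863469047242480558102386572357161446157169824713029318780220049442219048844875172353618928624707541014867735557109402687350750812884910339894521929981758990236110068504580734276368521931581287649348614171334218133066513,
     14919983900684585751849893970957286363879395310962252251239139309210378711554987507787941869989863673190556365774657929158628222146612694688652376036757978173347830740744852714067384212607846962081621414731537319556353237268034675128089654370138498119321799190898618143163305,
     15461217542528125367887158031942351323349090676929460511851043101419225983893959351116725113681526174577623805627227905961855190400843871693164395965453959612775583539150135702874080544474545383791943152137648134225820258760234916068179379005384357652954214460529063643786,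
     788536525043313642940871386486948351582809967074625451337031855105470492943778860822508043046007765216900701191041429412765578238330318782471101254678044437941224518058744369872378076733117050270867381276299267146171261900926586232946646310246120176062771294218610511500457,
     2811801249293716511051418692028317011923106898262655083624687216257472666385260650644253452158436264614077703840720262767968289602692976547426035875560339204304115657612628852488307104661094426750095430026266821036871681850137333420588078956637449674300820241985759093286345,
     1564852675074918205889333365219781530764620055896127231440814545103607781629645618323266503938452342658105494342881204236394099050022371582444860875587897889223347636789111513531014548321825587506452977369119715865033385444532350840136359837279247535298257865402446035432074,
     16815550678744957484986010640973594199383308375427849831670728116157766949521960460361281663130615360180206472612172967289287806336498275214140281285287889854659919295432240472701314431198133308441787246431306745023274143020301258659927867443988629939836758445844669226313,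
     8851612522370178] = true := by
  decide +kernel


/-- `σ` preserves adjacency. -/
def Aut (σ : ℕ → ℕ) : Prop :=
  (∀ x < 16, σ x < 16) ∧ ∀ x < 16, ∀ y < 16, A x y = true → A (σ x) (σ y) = true

theorem Good.comp {c : ℕ → ℕ → Bool} (hc : Good c) {σ : ℕ → ℕ} (h : Aut σ) :
    Good fun x y => c (σ x) (σ y) where
  symm x y := hc.symm _ _
  tri x y z hx hy hz h1 h2 h3 := hc.tri _ _ _ (h.1 x hx) (h.1 y hy) (h.1 z hz)
    (h.2 x hx y hy h1) (h.2 x hx z hz h2) (h.2 y hy z hz h3)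
  k4 x y z t hx hy hz ht h1 h2 h3 h4 h5 h6 := hc.k4 _ _ _ _ (h.1 x hx) (h.1 y hy) (h.1 z hz)
    (h.1 t ht) (h.2 x hx y hy h1) (h.2 x hx z hz h2) (h.2 x hx t ht h3) (h.2 y hy z hz h4)
    (h.2 y hy t ht h5) (h.2 z hz t ht h6)

/-- Rotation by `k` of the cycle `a, …, a + 4`. -/
def rot (a k x : ℕ) : ℕ :=
  if a ≤ x ∧ x < a + 5 then a + (x - a + k) % 5 else x

/-- Swap the first cycle with the second. -/
def sw1 (x : ℕ) : ℕ := if x = 0 then 0 else if x < 6 then x + 5 else if x < 11 then x - 5 else x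

/-- Swap the second cycle with the third. -/
def sw2 (x : ℕ) : ℕ := if x < 6 then x else if x < 11 then x + 5 else x - 5

theorem aut_sw1 : Aut sw1 := by unfold Aut; decide +kernel
theorem aut_sw2 : Aut sw2 := by unfold Aut; decide +kernel
theorem aut_rot1 : ∀ k < 5, Aut (rot 1 k) := by unfold Aut; decide +kernel
theorem aut_rot6 : ∀ k < 5, Aut (rot 6 k) := by unfold Aut; decide +kernel
theorem aut_rot11 : ∀ k < 5, Aut (rot 11 k) := by unfold Aut; decide +kernel

/-- The colours of `v` to the cycle starting at `a`: everything blue. -/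
def FF (c : ℕ → ℕ → Bool) (v a : ℕ) : Prop :=
  c v a = true ∧ c v (a + 1) = true ∧ c v (a + 2) = true ∧ c v (a + 3) = true ∧
    c v (a + 4) = true

/-- Two adjacent blue, followed by a red. -/
def EE (c : ℕ → ℕ → Bool) (v a : ℕ) : Prop :=
  c v a = true ∧ c v (a + 1) = true ∧ c v (a + 2) = false

/-- Red on an edge and on the opposite vertex. -/
def NN (c : ℕ → ℕ → Bool) (v a : ℕ) : Prop :=
  c v a = false ∧ c v (a + 1) = false ∧ c v (a + 3) = false

theorem nf_bool : ∀ a0 a1 a2 a3 a4 : Bool,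
    (a0 = true ∧ a1 = true ∧ a2 = true ∧ a3 = true ∧ a4 = true) ∨
    (a0 = true ∧ a1 = true ∧ a2 = false) ∨ (a1 = true ∧ a2 = true ∧ a3 = false) ∨
    (a2 = true ∧ a3 = true ∧ a4 = false) ∨ (a3 = true ∧ a4 = true ∧ a0 = false) ∨
    (a4 = true ∧ a0 = true ∧ a1 = false) ∨
    (a0 = false ∧ a1 = false ∧ a3 = false) ∨ (a1 = false ∧ a2 = false ∧ a4 = false) ∨
    (a2 = false ∧ a3 = false ∧ a0 = false) ∨ (a3 = false ∧ a4 = false ∧ a1 = false) ∨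
    (a4 = false ∧ a0 = false ∧ a2 = false) := by
  rintro (_ | _) (_ | _) (_ | _) (_ | _) (_ | _) <;> simp

/-- After a rotation of the cycle `a..a+4`, the colours of `v` to it are in normal form. -/
theorem nf (c : ℕ → ℕ → Bool) (v a : ℕ) (hv : v < a ∨ a + 5 ≤ v) :
    ∃ k < 5, FF (fun x y => c (rot a k x) (rot a k y)) v a ∨
      EE (fun x y => c (rot a k x) (rot a k y)) v a ∨
      NN (fun x y => c (rot a k x) (rot a k y)) v a := by
  have hv' : ∀ k, rot a k v = v := fun k => if_neg (by omega)
  have h0 : ∀ k, rot a k a = a + k % 5 := fun k => by simp [rot]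
  have h1 : ∀ i k, i < 5 → rot a k (a + i) = a + (i + k) % 5 := fun i k hi => by simp [rot, hi]
  simp only [FF, EE, NN, hv', h0, h1 1 _ (by norm_num), h1 2 _ (by norm_num),
    h1 3 _ (by norm_num), h1 4 _ (by norm_num)]
  have := nf_bool (c v a) (c v (a + 1)) (c v (a + 2)) (c v (a + 3)) (c v (a + 4))
  rcases this with h | h | h | h | h | h | h | h | h | h | h
  · exact ⟨0, by norm_num, Or.inl h⟩
  · exact ⟨0, by norm_num, Or.inr (Or.inl h)⟩
  · exact ⟨1, by norm_num, Or.inr (Or.inl h)⟩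
  · exact ⟨2, by norm_num, Or.inr (Or.inl h)⟩
  · exact ⟨3, by norm_num, Or.inr (Or.inl h)⟩
  · exact ⟨4, by norm_num, Or.inr (Or.inl h)⟩
  · exact ⟨0, by norm_num, Or.inr (Or.inr h)⟩
  · exact ⟨1, by norm_num, Or.inr (Or.inr h)⟩
  · exact ⟨2, by norm_num, Or.inr (Or.inr h)⟩
  · exact ⟨3, by norm_num, Or.inr (Or.inr h)⟩
  · exact ⟨4, by norm_num, Or.inr (Or.inr h)⟩

/-- All red. -/
def ZZ (c : ℕ → ℕ → Bool) (v a : ℕ) : Prop :=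
  c v a = false ∧ c v (a + 1) = false ∧ c v (a + 2) = false ∧ c v (a + 3) = false ∧
    c v (a + 4) = false

/-- The pattern of the colours of the edges of the third cycle. -/
def Cyc (c : ℕ → ℕ → Bool) (p0 p1 p2 p3 p4 : Bool) : Prop :=
  c 11 12 = p0 ∧ c 12 13 = p1 ∧ c 13 14 = p2 ∧ c 14 15 = p3 ∧ c 11 15 = p4

/-- The residual situation. -/
structure Res (c : ℕ → ℕ → Bool) : Prop where
  good : Good c
  ff : FF c 0 1
  nn : NN c 0 6
  zz : ZZ c 0 11

theorem Res.rot1 {c : ℕ → ℕ → Bool} (h : Res c) (k : ℕ) (hk : k < 5) :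
    Res fun x y => c (rot 1 k x) (rot 1 k y) := by
  refine ⟨h.good.comp (aut_rot1 k hk), ?_, h.nn, h.zz⟩
  obtain ⟨h0, h1, h2, h3, h4⟩ := h.ff
  interval_cases k
  · exact ⟨h0, h1, h2, h3, h4⟩
  · exact ⟨h1, h2, h3, h4, h0⟩
  · exact ⟨h2, h3, h4, h0, h1⟩
  · exact ⟨h3, h4, h0, h1, h2⟩
  · exact ⟨h4, h0, h1, h2, h3⟩

theorem Res.rot11 {c : ℕ → ℕ → Bool} (h : Res c) (k : ℕ) (hk : k < 5) :
    Res fun x y => c (rot 11 k x) (rot 11 k y) := by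
  refine ⟨h.good.comp (aut_rot11 k hk), h.ff, h.nn, ?_⟩
  obtain ⟨h0, h1, h2, h3, h4⟩ := h.zz
  interval_cases k
  · exact ⟨h0, h1, h2, h3, h4⟩
  · exact ⟨h1, h2, h3, h4, h0⟩
  · exact ⟨h2, h3, h4, h0, h1⟩
  · exact ⟨h3, h4, h0, h1, h2⟩
  · exact ⟨h4, h0, h1, h2, h3⟩

/-- Normalise the colours between vertex `7` and the first cycle. -/
theorem Res.norm7 {c : ℕ → ℕ → Bool} (h : Res c) :
    ∃ c' : ℕ → ℕ → Bool, Res c' ∧ (∀ x y, 6 ≤ x → 6 ≤ y → c' x y = c x y) ∧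
      ((c' 1 7 = true ∧ c' 2 7 = true) ∨
        (c' 1 7 = false ∧ c' 2 7 = false ∧ c' 4 7 = false)) := by
  obtain ⟨k, hk, hn⟩ := nf c 7 1 (by norm_num)
  refine ⟨_, h.rot1 k hk, fun x y hx hy => ?_, ?_⟩
  · have e : ∀ x, 6 ≤ x → rot 1 k x = x := fun x hx => if_neg (by omega)
    simp only [e x hx, e y hy]
  · have hs := (h.rot1 k hk).good.symm
    rcases hn with hn | hn | hn
    · exact Or.inl ⟨(hs _ _).trans hn.1, (hs _ _).trans hn.2.1⟩
    · exact Or.inl ⟨(hs _ _).trans hn.1, (hs _ _).trans hn.2.1⟩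
    · exact Or.inr ⟨(hs _ _).trans hn.1, (hs _ _).trans hn.2.1, (hs _ _).trans hn.2.2⟩

theorem cyc_bool : ∀ a b c d e : Bool,
    ∃ k < 5, ∃ p ∈ [[true, false, true, false, false], [true, true, false, true, false],
      [true, true, false, false, false], [true, true, true, false, false],
      [true, true, true, true, false], [true, false, false, false, false],
      [false, false, false, false, false], [true, true, true, true, true]],
      [a, b, c, d, e].rotate k = p := by decide +kernel

theorem Res.normCyc {c : ℕ → ℕ → Bool} (h : Res c) :
    ∃ c' : ℕ → ℕ → Bool, Res c' ∧
      (Cyc c' true false true false false ∨ Cyc c' true true false true false ∨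
      Cyc c' true true false false false ∨ Cyc c' true true true false false ∨
      Cyc c' true true true true false ∨ Cyc c' true false false false false ∨
      Cyc c' false false false false false ∨ Cyc c' true true true true true) := by
  obtain ⟨k, hk, p, hp, hkp⟩ := cyc_bool (c 11 12) (c 12 13) (c 13 14) (c 14 15) (c 15 11)
  refine ⟨_, h.rot11 k hk, ?_⟩
  have hs := h.good.symm
  have e1 := hs 15 11
  have e2 := hs 12 11
  have e3 := hs 13 12
  have e4 := hs 14 13
  have e5 := hs 15 14
  simp only [List.mem_cons, List.not_mem_nil, or_false] at hp
  interval_cases k <;> simp [List.rotate] at hkp <;> simp [Cyc, rot] <;>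
    rcases hp with rfl | rfl | rfl | rfl | rfl | rfl | rfl | rfl <;> simp_all

theorem Res.facts {c : ℕ → ℕ → Bool} (h : Res c) :
    c 0 1 = true ∧ c 0 2 = true ∧ c 0 3 = true ∧ c 0 4 = true ∧ c 0 5 = true ∧
    c 0 6 = false ∧ c 0 7 = false ∧ c 0 9 = false ∧ c 0 11 = false ∧ c 0 12 = false ∧
    c 0 13 = false ∧ c 0 14 = false ∧ c 0 15 = false :=
  ⟨h.ff.1, h.ff.2.1, h.ff.2.2.1, h.ff.2.2.2.1, h.ff.2.2.2.2, h.nn.1, h.nn.2.1, h.nn.2.2,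
    h.zz.1, h.zz.2.1, h.zz.2.2.1, h.zz.2.2.2.1, h.zz.2.2.2.2⟩

theorem Cyc.out {c : ℕ → ℕ → Bool} {p0 p1 p2 p3 p4 : Bool} (h : Cyc c p0 p1 p2 p3 p4) :
    c 11 12 = p0 ∧ c 12 13 = p1 ∧ c 13 14 = p2 ∧ c 14 15 = p3 ∧ c 11 15 = p4 := h

theorem Res.gen {c : ℕ → ℕ → Bool} (h : Res c)
    (hbb : ∀ c', Res c' → (∀ x y, 6 ≤ x → 6 ≤ y → c' x y = c x y) →
      c' 1 7 = true → c' 2 7 = true → False)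
    (hrr : ∀ c', Res c' → (∀ x y, 6 ≤ x → 6 ≤ y → c' x y = c x y) →
      c' 1 7 = false → c' 2 7 = false → c' 4 7 = false → False) : False := by
  obtain ⟨c', h', he, hn⟩ := h.norm7
  rcases hn with hn | hn
  · exact hbb c' h' he hn.1 hn.2
  · exact hrr c' h' he hn.1 hn.2.1 hn.2.2

/-- A monochromatic third cycle stays monochromatic after a rotation. -/
theorem cyc_rot {c : ℕ → ℕ → Bool} (hg : Good c) {p : Bool} (h : Cyc c p p p p p) (k : ℕ)
    (hk : k < 5) : Cyc (fun x y => c (rot 11 k x) (rot 11 k y)) p p p p p := by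
  obtain ⟨h0, h1, h2, h3, h4⟩ := h
  have e4 := (hg.symm 15 11).trans h4
  have e0 := (hg.symm 12 11).trans h0
  have e1 := (hg.symm 13 12).trans h1
  have e2 := (hg.symm 14 13).trans h2
  have e3 := (hg.symm 15 14).trans h3
  interval_cases k
  · exact ⟨h0, h1, h2, h3, h4⟩
  · exact ⟨h1, h2, h3, e4, e0⟩
  · exact ⟨h2, h3, e4, h0, e1⟩
  · exact ⟨h3, e4, h0, h1, e2⟩
  · exact ⟨e4, h0, h1, h2, e3⟩

theorem res_blue {c : ℕ → ℕ → Bool} (h0 : Res c) (hcyc : Cyc c true true true true true) :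
    False := by
  obtain ⟨k, hk, hn⟩ := nf c 6 11 (by norm_num)
  have h1 := h0.rot11 k hk
  have hcyc1 := cyc_rot h0.good hcyc k hk
  simp only [FF, EE, NN, Bool.not_eq_true', Bool.not_eq_false'] at hn
  generalize hc1 : (fun x y => c (rot 11 k x) (rot 11 k y)) = c1 at h1 hcyc1
  have hc2 : ∀ x y, c (rot 11 k x) (rot 11 k y) = c1 x y := fun x y => by rw [← hc1]
  simp only [hc2] at hn
  have hadj : ¬ (c1 6 11 = true ∧ c1 6 12 = true) := fun h =>
    refute h1.good cert_c11111_adj (by simp [h1.facts, hcyc1.out, h])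
      (by simp [h1.facts, hcyc1.out, h])
  have hn' : c1 6 11 = false ∧ c1 6 12 = false ∧ c1 6 14 = false := by
    rcases hn with hn | hn | hn
    · exact absurd ⟨hn.1, hn.2.1⟩ hadj
    · exact absurd ⟨hn.1, hn.2.1⟩ hadj
    · exact hn
  refine h1.gen (fun c' h' he a b => ?_) (fun c' h' he a b d => ?_)
  · exact refute h'.good cert_c11111_bb (by simp [h'.facts, he, hcyc1.out, hn', a, b])
      (by simp [h'.facts, he, hcyc1.out, hn', a, b])
  · exact refute h'.good cert_c11111_rr (by simp [h'.facts, he, hcyc1.out, hn', a, b, d])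
      (by simp [h'.facts, he, hcyc1.out, hn', a, b, d])

theorem res_red {c : ℕ → ℕ → Bool} (h0 : Res c) (hcyc : Cyc c false false false false false) :
    False := by
  obtain ⟨k, hk, hn⟩ := nf (fun x y => !c x y) 6 11 (by norm_num)
  have h1 := h0.rot11 k hk
  have hcyc1 := cyc_rot h0.good hcyc k hk
  simp only [FF, EE, NN, Bool.not_eq_true', Bool.not_eq_false'] at hn
  generalize hc1 : (fun x y => c (rot 11 k x) (rot 11 k y)) = c1 at h1 hcyc1
  have hc2 : ∀ x y, c (rot 11 k x) (rot 11 k y) = c1 x y := fun x y => by rw [← hc1]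
  simp only [hc2] at hn
  have hadj : ¬ (c1 6 11 = false ∧ c1 6 12 = false) := fun h =>
    refute h1.good cert_c00000_adj (by simp [h1.facts, hcyc1.out, h])
      (by simp [h1.facts, hcyc1.out, h])
  have hn' : c1 6 11 = true ∧ c1 6 12 = true ∧ c1 6 14 = true := by
    rcases hn with hn | hn | hn
    · exact absurd ⟨hn.1, hn.2.1⟩ hadj
    · exact absurd ⟨hn.1, hn.2.1⟩ hadj
    · exact hn
  refine h1.gen (fun c' h' he a b => ?_) (fun c' h' he a b d => ?_)
  · exact refute h'.good cert_c00000_bb (by simp [h'.facts, he, hcyc1.out, hn', a, b])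
      (by simp [h'.facts, he, hcyc1.out, hn', a, b])
  · exact refute h'.good cert_c00000_rr (by simp [h'.facts, he, hcyc1.out, hn', a, b, d])
      (by simp [h'.facts, he, hcyc1.out, hn', a, b, d])

theorem res_false {c : ℕ → ℕ → Bool} (h0 : Res c) : False := by
  obtain ⟨c1, h1, hcyc⟩ := h0.normCyc
  rcases hcyc with h | h | h | h | h | h | h | h
  · refine h1.gen (fun c' h' he a b => ?_) (fun c' h' he a b d => ?_)
    · exact refute h'.good cert_c10100_bb (by simp [h'.facts, he, h.out, a, b])
        (by simp [h'.facts, he, h.out, a, b])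
    · exact refute h'.good cert_c10100_rr (by simp [h'.facts, he, h.out, a, b, d])
        (by simp [h'.facts, he, h.out, a, b, d])
  · refine h1.gen (fun c' h' he a b => ?_) (fun c' h' he a b d => ?_)
    · exact refute h'.good cert_c11010_bb (by simp [h'.facts, he, h.out, a, b])
        (by simp [h'.facts, he, h.out, a, b])
    · exact refute h'.good cert_c11010_rr (by simp [h'.facts, he, h.out, a, b, d])
        (by simp [h'.facts, he, h.out, a, b, d])
  · refine h1.gen (fun c' h' he a b => ?_) (fun c' h' he a b d => ?_)
    · exact refute h'.good cert_c11000_bb (by simp [h'.facts, he, h.out, a, b])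
        (by simp [h'.facts, he, h.out, a, b])
    · exact refute h'.good cert_c11000_rr (by simp [h'.facts, he, h.out, a, b, d])
        (by simp [h'.facts, he, h.out, a, b, d])
  · refine h1.gen (fun c' h' he a b => ?_) (fun c' h' he a b d => ?_)
    · exact refute h'.good cert_c11100_bb (by simp [h'.facts, he, h.out, a, b])
        (by simp [h'.facts, he, h.out, a, b])
    · exact refute h'.good cert_c11100_rr (by simp [h'.facts, he, h.out, a, b, d])
        (by simp [h'.facts, he, h.out, a, b, d])
  · refine h1.gen (fun c' h' he a b => ?_) (fun c' h' he a b d => ?_)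
    · exact refute h'.good cert_c11110_bb (by simp [h'.facts, he, h.out, a, b])
        (by simp [h'.facts, he, h.out, a, b])
    · exact refute h'.good cert_c11110_rr (by simp [h'.facts, he, h.out, a, b, d])
        (by simp [h'.facts, he, h.out, a, b, d])
  · refine h1.gen (fun c' h' he a b => ?_) (fun c' h' he a b d => ?_)
    · exact refute h'.good cert_c10000_bb (by simp [h'.facts, he, h.out, a, b])
        (by simp [h'.facts, he, h.out, a, b])
    · exact refute h'.good cert_c10000_rr (by simp [h'.facts, he, h.out, a, b, d])
        (by simp [h'.facts, he, h.out, a, b, d])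
  · exact res_red h1 h
  · exact res_blue h1 h

/-- First cycle has a blue edge, the third is all red. -/
theorem no_bz {c : ℕ → ℕ → Bool} (hc : Good c) (h0 : FF c 0 1 ∨ EE c 0 1) (h1 : NN c 0 6)
    (h2 : ZZ c 0 11) : False := by
  rcases h0 with h0 | h0
  · exact res_false ⟨hc, h0, h1, h2⟩
  · simp only [EE, NN, ZZ, Nat.reduceAdd] at h0 h1 h2
    exact refute hc cert_k3c5 (by simp) (by simp [h0, h1, h2])

/-- First cycle has a blue edge, the others do not. -/
theorem no_b {c : ℕ → ℕ → Bool} (hc : Good c) (h0 : FF c 0 1 ∨ EE c 0 1) (h1 : NN c 0 6)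
    (h2 : NN c 0 11) : False := by
  have hb : c 0 1 = true ∧ c 0 2 = true := by
    rcases h0 with h | h
    · exact ⟨h.1, h.2.1⟩
    · exact ⟨h.1, h.2.1⟩
  have z2 : ¬ (c 0 13 = false ∧ c 0 15 = false) := fun h =>
    no_bz hc h0 h1 ⟨h2.1, h2.2.1, h.1, h2.2.2, h.2⟩
  have z1 : ¬ (c 0 8 = false ∧ c 0 10 = false) := fun h =>
    no_bz (hc.comp aut_sw2) h0 h2 ⟨h1.1, h1.2.1, h.1, h1.2.2, h.2⟩
  cases e8 : c 0 8 <;> cases e13 : c 0 13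
  · have e10 : c 0 10 = true := by simpa [e8] using z1
    have e15 : c 0 15 = true := by simpa [e13] using z2
    exact refute hc cert_iib10_15 (by simp [hb, e10, e15]) (by simp)
  · have e10 : c 0 10 = true := by simpa [e8] using z1
    exact refute hc cert_iib10_13 (by simp [hb, e10, e13]) (by simp)
  · have e15 : c 0 15 = true := by simpa [e13] using z2
    exact refute hc cert_iib8_15 (by simp [hb, e8, e15]) (by simp)
  · exact refute hc cert_iib8_13 (by simp [hb, e8, e13]) (by simp)

theorem fe_or {c : ℕ → ℕ → Bool} {v a : ℕ} (h : FF c v a ∨ EE c v a ∨ NN c v a) :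
    ((FF c v a ∨ EE c v a) ∧ c v a = true ∧ c v (a + 1) = true) ∨ NN c v a := by
  rcases h with h | h | h
  · exact Or.inl ⟨Or.inl h, h.1, h.2.1⟩
  · exact Or.inl ⟨Or.inr h, h.1, h.2.1⟩
  · exact Or.inr h

theorem not_good {c : ℕ → ℕ → Bool} (hc : Good c) : False := by
  obtain ⟨k, hk, n0⟩ := nf c 0 1 (by norm_num)
  have g1 := hc.comp (aut_rot1 k hk)
  generalize hc1 : (fun x y => c (rot 1 k x) (rot 1 k y)) = c1 at g1 n0
  obtain ⟨l, hl, n1⟩ := nf c1 0 6 (by norm_num)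
  have g2 := g1.comp (aut_rot6 l hl)
  have n0' : FF (fun x y => c1 (rot 6 l x) (rot 6 l y)) 0 1 ∨
    EE (fun x y => c1 (rot 6 l x) (rot 6 l y)) 0 1 ∨
    NN (fun x y => c1 (rot 6 l x) (rot 6 l y)) 0 1 := n0
  generalize hc2 : (fun x y => c1 (rot 6 l x) (rot 6 l y)) = c2 at g2 n0' n1
  obtain ⟨m, hm, n2⟩ := nf c2 0 11 (by norm_num)
  have g3 := g2.comp (aut_rot11 m hm)
  have n0'' : FF (fun x y => c2 (rot 11 m x) (rot 11 m y)) 0 1 ∨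
    EE (fun x y => c2 (rot 11 m x) (rot 11 m y)) 0 1 ∨
    NN (fun x y => c2 (rot 11 m x) (rot 11 m y)) 0 1 := n0'
  have n1' : FF (fun x y => c2 (rot 11 m x) (rot 11 m y)) 0 6 ∨
    EE (fun x y => c2 (rot 11 m x) (rot 11 m y)) 0 6 ∨
    NN (fun x y => c2 (rot 11 m x) (rot 11 m y)) 0 6 := n1
  generalize (fun x y => c2 (rot 11 m x) (rot 11 m y)) = d at g3 n0'' n1' n2
  rcases fe_or n0'' with ⟨h0, a0⟩ | h0 <;> rcases fe_or n1' with ⟨h1, a1⟩ | h1 <;>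
    rcases fe_or n2 with ⟨h2, a2⟩ | h2
  · simp only [Nat.reduceAdd] at a0 a1
    exact refute g3 cert_two01 (by simp [a0, a1]) (by simp)
  · simp only [Nat.reduceAdd] at a0 a1
    exact refute g3 cert_two01 (by simp [a0, a1]) (by simp)
  · simp only [Nat.reduceAdd] at a0 a2
    exact refute g3 cert_two02 (by simp [a0, a2]) (by simp)
  · exact no_b g3 h0 h1 h2
  · simp only [Nat.reduceAdd] at a1 a2
    exact refute g3 cert_two12 (by simp [a1, a2]) (by simp)
  · exact no_b (g3.comp aut_sw1) h1 h0 h2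
  · exact no_b ((g3.comp aut_sw2).comp aut_sw1) h2 h0 h1
  · simp only [NN, Nat.reduceAdd] at h0 h1 h2
    exact refute g3 cert_k6 (by simp) (by simp [h0, h1, h2])

/-- The join as a graph on `{0,…,15}`. -/
abbrev W := Fin 1 ⊕ Fin 5 ⊕ Fin 5 ⊕ Fin 5

def lab (x : ℕ) : W :=
  if x = 0 then .inl 0
  else if x < 6 then .inr (.inl (Fin.ofNat 5 (x - 1)))
  else if x < 11 then .inr (.inr (.inl (Fin.ofNat 5 (x - 6))))
  else .inr (.inr (.inr (Fin.ofNat 5 (x - 11))))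

def cyc5 (a b : Fin 5) : Bool := decide (a + 1 = b) || decide (b + 1 = a)

def joinAdj : W → W → Bool
  | .inl _, .inl _ => false
  | .inl _, .inr _ => true
  | .inr _, .inl _ => true
  | .inr (.inl a), .inr (.inl b) => cyc5 a b
  | .inr (.inl _), .inr (.inr _) => true
  | .inr (.inr _), .inr (.inl _) => true
  | .inr (.inr (.inl a)), .inr (.inr (.inl b)) => cyc5 a b
  | .inr (.inr (.inl _)), .inr (.inr (.inr _)) => true
  | .inr (.inr (.inr _)), .inr (.inr (.inl _)) => true
  | .inr (.inr (.inr a)), .inr (.inr (.inr b)) => cyc5 a b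

theorem cyc5_adj (a b : Fin 5) (h : cyc5 a b = true) : (cycleGraph 5).Adj a b := by
  revert a b; decide

theorem joinAdj_adj (a b : W) (h : joinAdj a b = true) :
    (graphJoin (⊤ : SimpleGraph (Fin 1))
      (graphJoin (cycleGraph 5) (graphJoin (cycleGraph 5) (cycleGraph 5)))).Adj a b := by
  rcases a with a | a | a | a <;> rcases b with b | b | b | b <;>
    first
    | exact trivial
    | exact cyc5_adj a b h
    | exact absurd h (by simp [joinAdj])

theorem lab_adj : ∀ x < 16, ∀ y < 16, A x y = true → joinAdj (lab x) (lab y) = true := by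
  decide +kernel

end K1C5

open K1C5 in
theorem red_nbhd_no_K1_join_C5_C5_C5 {V : Type*} (G : SimpleGraph V)
    (E1 E2 : Set (Sym2 V)) (hcol : IsBRColoring G E1 E2)
    (hfree : IsPQFree G E1 E2 3 5) (v : V) :
    ¬ ContainsCopy (G.induce (colorNbhd G E2 v))
        (graphJoin (⊤ : SimpleGraph (Fin 1))
          (graphJoin (cycleGraph 5) (graphJoin (cycleGraph 5) (cycleGraph 5)))) := by
  classical
  rintro ⟨f, hf⟩
  set u : ℕ → V := fun x => (f (lab x) : V) with hu
  have hadj : ∀ x y, x < 16 → y < 16 → A x y = true → G.Adj (u x) (u y) := fun x y hx hy h =>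
    hf _ _ (joinAdj_adj _ _ (lab_adj x hx y hy h))
  have hv : ∀ x, G.Adj v (u x) ∧ s(v, u x) ∈ E2 := fun x => (f (lab x)).2
  have hred : ∀ a b, G.Adj a b → s(a, b) ∉ E1 → s(a, b) ∈ E2 := by
    intro a b hab h1
    have : s(a, b) ∈ E1 ∪ E2 := by rw [hcol.1]; exact hab
    exact this.resolve_left h1
  refine not_good (c := fun x y => decide (s(u x, u y) ∈ E1)) ⟨?_, ?_, ?_⟩
  · intro x y
    simp only [Sym2.eq_swap]
  · intro x y z hx hy hz h1 h2 h3 c1 c2 c3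
    simp only [decide_eq_true_eq] at c1 c2 c3
    have a1 := hadj x y hx hy h1
    have a2 := hadj x z hx hz h2
    have a3 := hadj y z hy hz h3
    apply hfree.1
    refine ⟨{u x, u y, u z}, is3Clique_triple_iff.2 ⟨a1, a2, a3⟩, ?_⟩
    have s1 := c1
    have s2 := c2
    have s3 := c3
    rw [Sym2.eq_swap] at s1 s2 s3
    intro p hp q hq hpq
    simp only [Finset.mem_insert, Finset.mem_singleton] at hp hq
    rcases hp with rfl | rfl | rfl <;> rcases hq with rfl | rfl | rfl <;>
      first | assumption | exact absurd rfl hpq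
  · intro x y z t hx hy hz ht h1 h2 h3 h4 h5 h6 c1 c2 c3 c4 c5 c6
    simp only [decide_eq_false_iff_not] at c1 c2 c3 c4 c5 c6
    have a1 := hadj x y hx hy h1
    have a2 := hadj x z hx hz h2
    have a3 := hadj x t hx ht h3
    have a4 := hadj y z hy hz h4
    have a5 := hadj y t hy ht h5
    have a6 := hadj z t hz ht h6
    have r1 := hred _ _ a1 c1
    have r2 := hred _ _ a2 c2
    have r3 := hred _ _ a3 c3
    have r4 := hred _ _ a4 c4
    have r5 := hred _ _ a5 c5
    have r6 := hred _ _ a6 c6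
    obtain ⟨vx, wx⟩ := hv x
    obtain ⟨vy, wy⟩ := hv y
    obtain ⟨vz, wz⟩ := hv z
    obtain ⟨vt, wt⟩ := hv t
    have key : ∀ p ∈ ({v, u x, u y, u z, u t} : Finset V),
        ∀ q ∈ ({v, u x, u y, u z, u t} : Finset V), p ≠ q → G.Adj p q ∧ s(p, q) ∈ E2 := by
      have sw : ∀ p q, G.Adj p q ∧ s(p, q) ∈ E2 → G.Adj q p ∧ s(q, p) ∈ E2 :=
        fun p q h => ⟨h.1.symm, by rw [Sym2.eq_swap]; exact h.2⟩
      intro p hp q hq hpq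
      simp only [Finset.mem_insert, Finset.mem_singleton] at hp hq
      rcases hp with rfl | rfl | rfl | rfl | rfl <;>
        rcases hq with rfl | rfl | rfl | rfl | rfl <;>
        first
        | exact absurd rfl hpq
        | exact ⟨by assumption, by assumption⟩
        | exact sw _ _ ⟨by assumption, by assumption⟩
    apply hfree.2
    refine ⟨{v, u x, u y, u z, u t}, ⟨?_, ?_⟩, fun p hp q hq hpq => (key p hp q hq hpq).2⟩
    · intro p hp q hq hpq
      exact (key p hp q hq hpq).1
    · rw [Finset.card_insert_of_notMem, Finset.card_insert_of_notMem,
        Finset.card_insert_of_notMem, Finset.card_insert_of_notMem, Finset.card_singleton]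
      · simp [a6.ne]
      · simp [a4.ne, a5.ne]
      · simp [a1.ne, a2.ne, a3.ne]
      · simp [vx.ne, vy.ne, vz.ne, vt.ne]
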